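/- Let a_1, a_2, a_3, b_1, b_2 be positive reals with a_1 + a_2 + a_3 = 1 and b_1 + b_2 = 1, and set c = 1 − a_1 − a_3 b_1 (so c = a_2 + a_3 b_2 > 0). Define the 4×4 real matrices Q with rows (0, a_1, 1, b_1), (1, 0, 0, b_2), (0, a_2, 0, 0), (0, a_3, 0, 0) and Q̂ with rows (0, a_1, 1, a_2/c), (1, 0, 0, a_3 b_2/c), (0, a_3 b_1, 0, 0), (0, c, 0, 0). For q ∈ ℝ and a nonnegative matrix M, let M_q denote the matrix with (M_q)_{ij} = (M_{ij})^q if M_{ij} > 0 and (M_q)_{ij} = 0 otherwise. Then for every q ∈ ℝ, the characteristic polynomials of Q_q and Q̂_q are equal. -/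

import Mathlib

/-- The entrywise `q`-th power of a nonnegative matrix, taken only on positive
entries: `(M_q)_{ij} = (M_{ij})^q` if `M_{ij} > 0` and `0` otherwise. -/
noncomputable def entryPow (M : Matrix (Fin 4) (Fin 4) ℝ) (q : ℝ) :
    Matrix (Fin 4) (Fin 4) ℝ :=
  Matrix.of fun i j => if 0 < M i j then (M i j) ^ q else 0

/-!
Read as a weighted digraph, the common pattern of `Q` and `Q̂` has four cycles, all passing through
one vertex, so no two of them are disjoint. The characteristic polynomial therefore depends only on
the total weight of the 2-cycles and the total weight of the 3-cycles. For both matrices the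
2-cycles have weights `a₁` and `a₃ b₂`, and the 3-cycles have weights `a₂` and `a₃ b₁`, in opposite
orders. Since `x ↦ x ^ q` is multiplicative, these coincidences persist in `Q_q` and `Q̂_q`.
-/

/-- The real power `x ^ q` of a positive number `x`, extended by `0`: the function which `entryPow`
applies to each entry. Among nonnegative `x`, it differs from `Real.rpow` only at `x = 0 = q`, where
`Real.rpow` gives `1`. -/
noncomputable def posPow (q x : ℝ) : ℝ :=
  if 0 < x then x ^ q else 0

@[simp]
lemma posPow_zero (q : ℝ) : posPow q 0 = 0 :=
  if_neg (lt_irrefl 0)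

@[simp]
lemma posPow_one (q : ℝ) : posPow q 1 = 1 := by
  simp [posPow]

lemma posPow_mul (q : ℝ) {x y : ℝ} (hx : 0 ≤ x) (hy : 0 ≤ y) :
    posPow q (x * y) = posPow q x * posPow q y := by
  rcases hx.eq_or_lt with rfl | hx'
  · simp
  rcases hy.eq_or_lt with rfl | hy'
  · simp
  simp [posPow, hx', hy', Real.mul_rpow hx hy]

lemma entryPow_eq_map (M : Matrix (Fin 4) (Fin 4) ℝ) (q : ℝ) :
    entryPow M q = M.map (posPow q) :=
  rfl

/-- The common pattern of the matrices `Q` and `Q̂`. As the weighted adjacency matrix of a digraph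
on `Fin 4`, its cycles are `0 → 1 → 0` and `1 → 3 → 1` of weights `x` and `z * v`, and
`0 → 2 → 1 → 0` and `0 → 3 → 1 → 0` of weights `u` and `y * v`. -/
def fourCycleMatrix {R : Type*} [Zero R] [One R] (x y z u v : R) : Matrix (Fin 4) (Fin 4) R :=
  !![0, x, 1, y;
     1, 0, 0, z;
     0, u, 0, 0;
     0, v, 0, 0]

lemma fourCycleMatrix_map {R S : Type*} [Zero R] [One R] [Zero S] [One S] {f : R → S}
    (h0 : f 0 = 0) (h1 : f 1 = 1) (x y z u v : R) :
    (fourCycleMatrix x y z u v).map f = fourCycleMatrix (f x) (f y) (f z) (f u) (f v) := by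
  ext i j
  fin_cases i <;> fin_cases j <;> simp [fourCycleMatrix, h0, h1]

section CharacteristicPolynomial

open Polynomial

lemma charmatrix_fourCycleMatrix {R : Type*} [CommRing R] (x y z u v : R) :
    (fourCycleMatrix x y z u v).charmatrix =
      !![X, -C x, -1, -C y;
         -1, X, 0, -C z;
         0, -C u, X, 0;
         0, -C v, 0, X] := by
  ext1 i j
  fin_cases i <;> fin_cases j <;> simp [fourCycleMatrix]

lemma charpoly_fourCycleMatrix {R : Type*} [CommRing R] (x y z u v : R) :
    (fourCycleMatrix x y z u v).charpoly =
      X ^ 4 - C (x + z * v) * X ^ 2 - C (u + y * v) * X := by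
  have expand_row_zero : (fourCycleMatrix x y z u v).charmatrix.det =
      X * !![X, 0, -C z; -C u, X, 0; -C v, 0, X].det
        + C x * !![-1, 0, -C z; 0, X, 0; 0, 0, X].det
        - !![-1, X, -C z; 0, -C u, 0; 0, -C v, X].det
        + C y * !![-1, X, 0; 0, -C u, X; 0, -C v, 0].det := by
    rw [charmatrix_fourCycleMatrix, Matrix.det_succ_row_zero, Fin.sum_univ_four]
    simp [Matrix.det_fin_three, Fin.succAbove, pow_succ, sub_eq_add_neg]
  rw [Matrix.charpoly, expand_row_zero]
  simp only [Matrix.det_fin_three, Matrix.of_apply, Matrix.cons_val, map_add, map_mul]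
  ring

lemma charpoly_entryPow_fourCycleMatrix (q x u : ℝ) {y z v : ℝ}
    (hy : 0 ≤ y) (hz : 0 ≤ z) (hv : 0 ≤ v) :
    (entryPow (fourCycleMatrix x y z u v) q).charpoly =
      X ^ 4 - C (posPow q x + posPow q (z * v)) * X ^ 2
        - C (posPow q u + posPow q (y * v)) * X := by
  rw [entryPow_eq_map, fourCycleMatrix_map (posPow_zero q) (posPow_one q),
    charpoly_fourCycleMatrix, posPow_mul q hz hv, posPow_mul q hy hv]

end CharacteristicPolynomial

theorem statement19_general (q a1 : ℝ) {a2 a3 b1 b2 c : ℝ}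
    (ha2 : 0 ≤ a2) (ha3 : 0 ≤ a3) (hb1 : 0 ≤ b1) (hb2 : 0 ≤ b2) (hc : 0 < c) :
    (entryPow !![0, a1, 1, b1;
                 1, 0, 0, b2;
                 0, a2, 0, 0;
                 0, a3, 0, 0] q).charpoly =
      (entryPow !![0, a1, 1, a2 / c;
                   1, 0, 0, a3 * b2 / c;
                   0, a3 * b1, 0, 0;
                   0, c, 0, 0] q).charpoly := by
  change (entryPow (fourCycleMatrix a1 b1 b2 a2 a3) q).charpoly =
    (entryPow (fourCycleMatrix a1 (a2 / c) (a3 * b2 / c) (a3 * b1) c) q).charpoly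
  have two_cycle_weight : a3 * b2 / c * c = b2 * a3 := by
    rw [div_mul_cancel₀ _ hc.ne', mul_comm]
  have three_cycle_weight : a2 / c * c = a2 := div_mul_cancel₀ a2 hc.ne'
  rw [charpoly_entryPow_fourCycleMatrix q a1 a2 hb1 hb2 ha3,
    charpoly_entryPow_fourCycleMatrix q a1 (a3 * b1) (by positivity) (by positivity) hc.le,
    two_cycle_weight, three_cycle_weight, mul_comm b1 a3, add_comm (posPow q a2)]

/-- from the proof of Lemma 5.4: for the two stochastic matrices
`Q` and `Q̂` below, the characteristic polynomials of the entrywise powers `Q_q` and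
`Q̂_q` coincide for every `q ∈ ℝ`. -/
theorem statement19 (a1 a2 a3 b1 b2 c : ℝ)
    (ha1 : 0 < a1) (ha2 : 0 < a2) (ha3 : 0 < a3) (hb1 : 0 < b1) (hb2 : 0 < b2)
    (hsa : a1 + a2 + a3 = 1) (hsb : b1 + b2 = 1)
    (hc : c = 1 - a1 - a3 * b1) :
    ∀ q : ℝ,
      (entryPow !![0, a1, 1, b1;
                   1, 0, 0, b2;
                   0, a2, 0, 0;
                   0, a3, 0, 0] q).charpoly =
        (entryPow !![0, a1, 1, a2 / c;
                     1, 0, 0, a3 * b2 / c;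
                     0, a3 * b1, 0, 0;
                     0, c, 0, 0] q).charpoly := by
  have c_eq : c = a2 + a3 * b2 := by linear_combination hc - hsa - a3 * hsb
  have c_pos : 0 < c := c_eq ▸ by positivity
  exact fun q ↦ statement19_general q a1 ha2.le ha3.le hb1.le hb2.le c_pos
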